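/- arXiv:1311.7449 — 2 statements merged into one kernel-verified Lean document; each statement's English description precedes it below -/
import Mathlib

section
/- Let n, θ be integers with 2 ≤ θ ≤ n−1 and let p_c := inf{ p ∈ (0,1) : φ_{n,p,θ}(x) > x for every x ∈ (0,1) }. Then there exists x ∈ (0,1) solving simultaneously the system φ_{n,p_c,θ}(x) = x and (1−p_c)·n·C(n−1,θ−1)·x^{θ−1}·(1−x)^{n−θ} = 1; i.e., the critical value p_c together with some x ∈ (0,1) satisfies φ_{n,p,θ}(x) = x and φ'_{n,p,θ}(x) = 1. -/
/-- `φ_{n,p,θ}(x) = p + (1-p) * ∑_{k=θ}^{n} C(n,k) x^k (1-x)^{n-k}`. -/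
noncomputable def phiBP (n θ : ℕ) (p x : ℝ) : ℝ :=
  p + (1 - p) * ∑ k ∈ Finset.Icc θ n, (n.choose k : ℝ) * x ^ k * (1 - x) ^ (n - k)

/-!
Write `φ_p = p + (1 - p) f`, where `f` is the upper tail of the binomial distribution, and let
`q x = (1 - f x) / (1 - x)` be the slope of the chord of `f` from `x` to the fixed point `1`. Since
`φ_p x - x = (1 - x) (1 - (1 - p) q x)`, the condition `φ_p > id` on `(0, 1)` says that
`(1 - p) q < 1` there, so `1 - p_c` is the reciprocal of the maximum of `q`. This maximum exceeds
`1` because `f x < x` for small `x`, whereas `q 0 = 1` and `q 1 = f' 1 = 0`; it is therefore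
attained at an interior point `x`, where the chord is tangent to the graph:
`f' x = q x = 1 / (1 - p_c)`.
-/

open Set Filter Topology Polynomial

section ChordSlope

lemma deriv_eq_dslope_of_isLocalExtr {f : ℝ → ℝ} {a x : ℝ} (hxa : x ≠ a)
    (hf : DifferentiableAt ℝ f x) (hext : IsLocalExtr (dslope f a) x) :
    deriv f x = dslope f a x := by
  have hslope : HasDerivAt (dslope f a) 0 x := by
    simpa only [hext.deriv_eq_zero] using
      ((differentiableAt_dslope_of_ne hxa).2 hf).hasDerivAt
  have hchord : f = fun y ↦ (y - a) * dslope f a y + f a := by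
    funext y
    rw [← smul_eq_mul, sub_smul_dslope, sub_add_cancel]
  have hderiv := (((hasDerivAt_id x).sub_const a).mul hslope).add_const (f a)
  rw [one_mul, mul_zero, add_zero] at hderiv
  exact (hderiv.congr_of_eventuallyEq (.of_eq hchord)).deriv

lemma eventually_lt_self_of_hasDerivWithinAt_lt_one {f : ℝ → ℝ} {f' a : ℝ}
    (hf : HasDerivWithinAt f f' (Ioi a) a) (ha : f a = a) (hf' : f' < 1) :
    ∀ᶠ x in 𝓝[>] a, f x < x := by
  filter_upwards [hf.limsup_slope_le' self_notMem_Ioi hf', self_mem_nhdsWithin]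
    with x hslope hx
  rw [slope_def_field, div_lt_one (sub_pos.2 hx), ha] at hslope
  linarith

lemma exists_isMaxOn_dslope_one {f : ℝ → ℝ} (hf : Continuous f) (hf1 : DifferentiableAt ℝ f 1)
    (h0 : 0 ≤ f 0) (h1 : f 1 = 1) (hd1 : deriv f 1 ≤ 1) (hlt : ∃ y ∈ Ioo 0 1, f y < y) :
    ∃ x ∈ Ioo 0 1, IsMaxOn (dslope f 1) (Icc 0 1) x ∧ 1 < dslope f 1 x := by
  obtain ⟨y, hy, hfy⟩ := hlt
  have hqy : 1 < dslope f 1 y := by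
    rw [dslope_of_ne f hy.2.ne, slope_def_field, h1, one_lt_div_of_neg (sub_neg.2 hy.2)]
    linarith
  have hq0 : dslope f 1 0 ≤ 1 := by
    rw [dslope_of_ne f zero_ne_one, slope_def_field, h1, zero_sub, div_neg, div_one]
    linarith
  have hq1 : dslope f 1 1 ≤ 1 := by rwa [dslope_same]
  have hcont : Continuous (dslope f 1) := by
    rw [← continuousOn_univ, continuousOn_dslope univ_mem]
    exact ⟨hf.continuousOn, hf1⟩
  have hends : ∀ z ∈ Icc (0 : ℝ) 1 \ Ioo 0 1, dslope f 1 z < dslope f 1 y := by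
    rw [Icc_sdiff_Ioo_same zero_le_one]
    rintro z (rfl | rfl)
    exacts [hq0.trans_lt hqy, hq1.trans_lt hqy]
  obtain ⟨x, hx, hmax⟩ := isCompact_Icc.exists_isMaxOn_mem_subset hcont.continuousOn
    (Ioo_subset_Icc_self hy) hends
  exact ⟨x, hx, hmax, hqy.trans_le (hmax (Ioo_subset_Icc_self hy))⟩

end ChordSlope

section CriticalSeed

/-- The activation map `p + (1 - p) f` of a site that is active from the start with probability `p`
and is otherwise activated with probability `f x`, where `x` is the density of active sites. -/
def seededMap (p : ℝ) (f : ℝ → ℝ) (x : ℝ) : ℝ := p + (1 - p) * f x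

/-- The seed probabilities `p` for which `seededMap p f` has no obstruction to full activation, in
that it lies strictly above the diagonal on `(0, 1)`. Its infimum is the critical probability. -/
def supercriticalSeeds (f : ℝ → ℝ) : Set ℝ :=
  {p | 0 < p ∧ p < 1 ∧ ∀ x, 0 < x → x < 1 → x < seededMap p f x}

variable {f : ℝ → ℝ} {x : ℝ}

lemma seededMap_sub_self (h1 : f 1 = 1) (p x : ℝ) :
    seededMap p f x - x = (1 - x) * (1 - (1 - p) * dslope f 1 x) := by
  have hchord : (x - 1) * dslope f 1 x = f x - 1 := by
    rw [← smul_eq_mul, sub_smul_dslope, h1]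
  unfold seededMap
  linear_combination -(1 - p) * hchord

lemma lt_seededMap_iff (h1 : f 1 = 1) (p : ℝ) (hx : x < 1) :
    x < seededMap p f x ↔ (1 - p) * dslope f 1 x < 1 := by
  rw [← sub_pos, seededMap_sub_self h1, mul_pos_iff_of_pos_left (sub_pos.2 hx), sub_pos]

lemma supercriticalSeeds_eq_Ioo (h1 : f 1 = 1) (hx : x ∈ Ioo 0 1)
    (hmax : IsMaxOn (dslope f 1) (Ioo 0 1) x) (hone : 1 ≤ dslope f 1 x) :
    supercriticalSeeds f = Ioo (1 - (dslope f 1 x)⁻¹) 1 := by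
  have hpos : 0 < dslope f 1 x := one_pos.trans_le hone
  have hiff (p : ℝ) : 1 - (dslope f 1 x)⁻¹ < p ↔ (1 - p) * dslope f 1 x < 1 := by
    rw [sub_lt_comm, ← one_div, lt_div_iff₀ hpos]
  ext p
  refine ⟨fun ⟨_, hp1, hp⟩ ↦ ⟨?_, hp1⟩, fun ⟨hp, hp1⟩ ↦ ⟨?_, hp1, fun y hy0 hy1 ↦ ?_⟩⟩
  · rw [hiff, ← lt_seededMap_iff h1 p hx.2]
    exact hp x hx.1 hx.2
  · exact (sub_nonneg.2 (inv_le_one_of_one_le₀ hone)).trans_lt hp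
  · rw [lt_seededMap_iff h1 p hy1]
    exact (mul_le_mul_of_nonneg_left (hmax ⟨hy0, hy1⟩) (sub_nonneg.2 hp1.le)).trans_lt
      ((hiff p).1 hp)

theorem exists_tangency_at_sInf_supercriticalSeeds (hf : Differentiable ℝ f) (h0 : f 0 = 0)
    (h1 : f 1 = 1) (hd0 : deriv f 0 < 1) (hd1 : deriv f 1 ≤ 1) :
    ∃ x ∈ Ioo 0 1, seededMap (sInf (supercriticalSeeds f)) f x = x ∧
      (1 - sInf (supercriticalSeeds f)) * deriv f x = 1 := by
  have hlt : ∃ y ∈ Ioo 0 1, f y < y :=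
    ((eventually_mem_set.2 (Ioo_mem_nhdsGT zero_lt_one)).and
      (eventually_lt_self_of_hasDerivWithinAt_lt_one
        (hf 0).hasDerivAt.hasDerivWithinAt h0 hd0)).exists
  obtain ⟨x, hx, hmax, hone⟩ :=
    exists_isMaxOn_dslope_one hf.continuous (hf 1) h0.ge h1 hd1 hlt
  have hpos : 0 < dslope f 1 x := one_pos.trans hone
  have hcrit : sInf (supercriticalSeeds f) = 1 - (dslope f 1 x)⁻¹ := by
    rw [supercriticalSeeds_eq_Ioo h1 hx (hmax.on_subset Ioo_subset_Icc_self) hone.le,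
      csInf_Ioo (sub_lt_self 1 (inv_pos.2 hpos))]
  have hinv : (1 - sInf (supercriticalSeeds f)) * dslope f 1 x = 1 := by
    rw [hcrit, sub_sub_cancel, inv_mul_cancel₀ hpos.ne']
  have htangent : deriv f x = dslope f 1 x :=
    deriv_eq_dslope_of_isLocalExtr hx.2.ne (hf x)
      (.inr (hmax.isLocalMax (Icc_mem_nhds hx.1 hx.2)))
  refine ⟨x, hx, ?_, htangent ▸ hinv⟩
  rw [← sub_eq_zero, seededMap_sub_self h1, hinv, sub_self, mul_zero]

end CriticalSeed

section BinomialTail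

variable (R : Type*) [CommRing R]

/-- The probability that a binomial variable with `n` trials is at least `θ`, as a polynomial in
the success probability. -/
noncomputable def binomialTail (n θ : ℕ) : R[X] :=
  ∑ k ∈ Finset.Ico θ (n + 1), bernsteinPolynomial R n k

lemma eval_zero_binomialTail (n : ℕ) {θ : ℕ} (hθ : θ ≠ 0) :
    (binomialTail R n θ).eval 0 = 0 := by
  rw [binomialTail, eval_finsetSum]
  refine Finset.sum_eq_zero fun k hk ↦ ?_
  rw [bernsteinPolynomial.eval_at_0, if_neg]
  exact ((Nat.pos_of_ne_zero hθ).trans_le (Finset.mem_Ico.1 hk).1).ne'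

lemma eval_one_binomialTail {n θ : ℕ} (hθ : θ ≤ n) : (binomialTail R n θ).eval 1 = 1 := by
  simp only [binomialTail, eval_finsetSum, bernsteinPolynomial.eval_at_1, Finset.sum_ite_eq',
    Finset.mem_Ico, hθ, n.lt_succ_self, and_self, if_true]

lemma derivative_binomialTail {n m : ℕ} (hm : m < n) :
    derivative (binomialTail R n (m + 1)) = n * bernsteinPolynomial R (n - 1) m := by
  have hlast : bernsteinPolynomial R (n - 1) n = 0 :=
    bernsteinPolynomial.eq_zero_of_lt R (Nat.sub_one_lt_of_lt hm)
  calc derivative (binomialTail R n (m + 1))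
      = ∑ k ∈ Finset.Ico m n, derivative (bernsteinPolynomial R n (k + 1)) := by
        rw [binomialTail, derivative_sum, ← Finset.sum_Ico_add']
    _ = -n * ∑ k ∈ Finset.Ico m n,
          (bernsteinPolynomial R (n - 1) (k + 1) - bernsteinPolynomial R (n - 1) k) := by
        rw [Finset.mul_sum]
        refine Finset.sum_congr rfl fun k _ ↦ ?_
        rw [bernsteinPolynomial.derivative_succ]
        ring
    _ = n * bernsteinPolynomial R (n - 1) m := by
        rw [Finset.sum_Ico_sub _ hm.le, hlast]
        ring

end BinomialTail

lemma phiBP_eq_seededMap (n θ : ℕ) (p x : ℝ) :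
    phiBP n θ p x = seededMap p (fun y ↦ (binomialTail ℝ n θ).eval y) x := by
  simp only [phiBP, seededMap, binomialTail, bernsteinPolynomial, eval_finsetSum, eval_mul,
    eval_pow, eval_sub, eval_natCast, eval_X, eval_one, Finset.Ico_add_one_right_eq_Icc]

theorem stmt_9 (n θ : ℕ) (hθ : 2 ≤ θ) (hθn : θ < n)
    (pc : ℝ)
    (hpc : pc = sInf {p : ℝ | 0 < p ∧ p < 1 ∧ ∀ x : ℝ, 0 < x → x < 1 → phiBP n θ p x > x}) :
    ∃ x : ℝ, 0 < x ∧ x < 1 ∧ phiBP n θ pc x = x ∧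
      (1 - pc) * n * ((n - 1).choose (θ - 1) : ℝ) * x ^ (θ - 1) * (1 - x) ^ (n - θ) = 1 := by
  obtain ⟨m, rfl⟩ : ∃ m, θ = m + 1 := ⟨θ - 1, by omega⟩
  set f : ℝ → ℝ := fun x ↦ (binomialTail ℝ n (m + 1)).eval x
  have hderiv (x : ℝ) : deriv f x = n * (bernsteinPolynomial ℝ (n - 1) m).eval x := by
    rw [Polynomial.deriv, derivative_binomialTail ℝ (by omega), eval_mul, eval_natCast]
  have hd0 : deriv f 0 = 0 := by
    rw [hderiv, bernsteinPolynomial.eval_at_0, if_neg (by omega), mul_zero]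
  have hd1 : deriv f 1 = 0 := by
    rw [hderiv, bernsteinPolynomial.eval_at_1, if_neg (by omega), mul_zero]
  obtain ⟨x, ⟨hx0, hx1⟩, hfix, htangent⟩ := exists_tangency_at_sInf_supercriticalSeeds
    (binomialTail ℝ n (m + 1)).differentiable (eval_zero_binomialTail ℝ n m.succ_ne_zero)
    (eval_one_binomialTail ℝ hθn.le) (hd0.trans_lt one_pos) (hd1.trans_le zero_le_one)
  have hpc' : pc = sInf (supercriticalSeeds f) := by
    simpa only [phiBP_eq_seededMap, supercriticalSeeds] using hpc
  rw [← hpc'] at hfix htangent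
  refine ⟨x, hx0, hx1, (phiBP_eq_seededMap n (m + 1) pc x).trans hfix, ?_⟩
  rw [hderiv] at htangent
  simpa [bernsteinPolynomial, Nat.sub_sub, add_comm m 1, mul_assoc] using htangent
end

section
/- Let n, θ be integers with 2 ≤ θ ≤ n−1 and let p_c := inf{ p ∈ (0,1) : φ_{n,p,θ}(x) > x for every x ∈ (0,1) }. For every p with 0 < p < p_c, the equation φ_{n,p,θ}(x) = x has exactly two solutions in the open interval (0,1); and for every p with p_c < p < 1, it has no solutions in (0,1). -/
/-! On `[0, 1]` the function `φ_p - id` has at most three zeros: its derivative is an affine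
function of a single Bernstein polynomial, which takes each value at most twice because it has
only one critical point in `(0, 1)`; Rolle's theorem does the counting. One of the three zeros is
`1`. Since `φ_p 0 > 0` and `φ_p - id` has slope `-1` at `1`, a single point where `φ_p x < x`
forces a fixed point on each side of it. Finally `φ_p x` is strictly increasing in `p`, so below
`p_c` such a point exists, and above `p_c` the graph of `φ_p` lies above the diagonal. -/

open Function (fixedPoints IsFixedPt)
open Polynomial Set
open scoped Topology

theorem encard_inter_fiber_le_encard_deriv_zeros_add_one {f : ℝ → ℝ} {s : Set ℝ}
    (hs : s.OrdConnected) (hf : ContinuousOn f s) (c : ℝ) :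
    (s ∩ f ⁻¹' {c}).encard ≤ (interior s ∩ deriv f ⁻¹' {0}).encard + 1 := by
  by_cases hfin : (interior s ∩ deriv f ⁻¹' {0}).Finite
  swap
  · simp [encard_eq_top_iff.mpr hfin]
  refine ENat.forall_natCast_le_iff_le.mp fun m hm ↦ ?_
  obtain ⟨u, hu, hum⟩ := exists_subset_encard_eq hm
  lift u to Finset ℝ using finite_of_encard_eq_coe hum
  rw [← hum, encard_coe_eq_coe_finsetCard, hfin.encard_eq_coe_toFinset_card]
  norm_cast
  refine Finset.card_le_of_interleaved fun x hx y hy hxy _ ↦ ?_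
  have hsub : Icc x y ⊆ s := hs.out (hu hx).1 (hu hy).1
  obtain ⟨z, hz, hz0⟩ := exists_deriv_eq_zero hxy (hf.mono hsub) ((hu hx).2.trans (hu hy).2.symm)
  have hzs : z ∈ interior s := interior_maximal (Ioo_subset_Icc_self.trans hsub) isOpen_Ioo hz
  exact ⟨z, hfin.mem_toFinset.mpr ⟨hzs, hz0⟩, hz⟩

theorem X_mul_one_sub_X_mul_derivative_bernsteinPolynomial (R : Type*) [CommRing R] (n ν : ℕ) :
    X * (1 - X) * derivative (bernsteinPolynomial R n ν) =
      ((ν : R[X]) - (n : R[X]) * X) * bernsteinPolynomial R n ν := by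
  rcases lt_or_ge n ν with hν | hν
  · simp [bernsteinPolynomial.eq_zero_of_lt R hν]
  obtain ⟨m, rfl⟩ := Nat.exists_eq_add_of_le hν
  have hX : X * derivative (X ^ ν : R[X]) = (ν : R[X]) * X ^ ν := by
    rcases ν with - | ν
    · simp
    · rw [derivative_X_pow, C_eq_natCast, Nat.add_sub_cancel]
      ring
  have hX' : (1 - X) * derivative ((1 - X) ^ m : R[X]) = -(m : R[X]) * (1 - X) ^ m := by
    rcases m with - | m
    · simp
    · rw [derivative_pow, C_eq_natCast, Nat.add_sub_cancel, derivative_sub, derivative_one,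
        derivative_X]
      ring
  simp only [bernsteinPolynomial, Nat.add_sub_cancel_left, derivative_mul, derivative_natCast,
    Nat.cast_add]
  linear_combination ((ν + m).choose ν : R[X]) * (1 - X) ^ (m + 1) * hX +
    ((ν + m).choose ν : R[X]) * X ^ (ν + 1) * hX'

theorem eval_bernsteinPolynomial_nonneg {R : Type*} [CommRing R] [PartialOrder R]
    [IsOrderedRing R] (n ν : ℕ) {x : R} (hx : x ∈ Icc 0 1) :
    0 ≤ (bernsteinPolynomial R n ν).eval x := by
  have h0 : 0 ≤ x := hx.1
  have h1 : 0 ≤ 1 - x := sub_nonneg.mpr hx.2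
  simp only [bernsteinPolynomial, eval_mul, eval_natCast, eval_pow, eval_X, eval_sub, eval_one]
  positivity

theorem eval_bernsteinPolynomial_pos {R : Type*} [CommRing R] [PartialOrder R]
    [IsStrictOrderedRing R] {n ν : ℕ} (hν : ν ≤ n) {x : R} (hx : x ∈ Ioo 0 1) :
    0 < (bernsteinPolynomial R n ν).eval x := by
  have hchoose : (0 : R) < n.choose ν := mod_cast Nat.choose_pos hν
  have h0 : 0 < x := hx.1
  have h1 : 0 < 1 - x := sub_pos.mpr hx.2
  simp only [bernsteinPolynomial, eval_mul, eval_natCast, eval_pow, eval_X, eval_sub, eval_one]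
  positivity

theorem eq_div_of_eval_derivative_bernsteinPolynomial_eq_zero {K : Type*} [Field K] [PartialOrder K]
    [IsStrictOrderedRing K] {n ν : ℕ} (hn : n ≠ 0) (hν : ν ≤ n) {x : K} (hx : x ∈ Ioo 0 1)
    (h : (derivative (bernsteinPolynomial K n ν)).eval x = 0) : x = ν / n := by
  have key := congr_arg (eval x) (X_mul_one_sub_X_mul_derivative_bernsteinPolynomial K n ν)
  simp only [eval_mul, h, mul_zero, eval_sub, eval_natCast, eval_X] at key
  have hνx : (ν - n * x : K) = 0 :=
    (mul_eq_zero.mp key.symm).resolve_right (eval_bernsteinPolynomial_pos hν hx).ne'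
  rw [eq_div_iff (mod_cast hn)]
  linear_combination -hνx

theorem encard_Icc_inter_bernsteinPolynomial_fiber_le_two {n ν : ℕ} (hn : n ≠ 0) (hν : ν ≤ n)
    (c : ℝ) : (Icc 0 1 ∩ (bernsteinPolynomial ℝ n ν).eval ⁻¹' {c}).encard ≤ 2 := by
  refine (encard_inter_fiber_le_encard_deriv_zeros_add_one ordConnected_Icc
    (bernsteinPolynomial ℝ n ν).continuousOn c).trans ?_
  rw [interior_Icc, ← one_add_one_eq_two]
  gcongr
  rw [← encard_singleton (ν / n : ℝ)]
  refine encard_le_encard fun x ⟨hx, hx0⟩ ↦ ?_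
  rw [mem_preimage, Polynomial.deriv] at hx0
  exact eq_div_of_eval_derivative_bernsteinPolynomial_eq_zero hn hν hx hx0

section BernsteinTail

/-- The probability that a binomial variable with `n` trials is at least `θ`, as a polynomial in the
success probability; the sum occurring in `phiBP`. -/
noncomputable def bernsteinTail (R : Type*) [CommRing R] (n θ : ℕ) : R[X] :=
  ∑ k ∈ Finset.Icc θ n, bernsteinPolynomial R n k

theorem derivative_bernsteinTail (R : Type*) [CommRing R] {n θ : ℕ} (hθ : 0 < θ) (hθn : θ ≤ n) :
    derivative (bernsteinTail R n θ) = n * bernsteinPolynomial R (n - 1) (θ - 1) := by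
  obtain ⟨t, rfl⟩ := Nat.exists_eq_succ_of_ne_zero hθ.ne'
  have htop : bernsteinPolynomial R (n - 1) n = 0 :=
    bernsteinPolynomial.eq_zero_of_lt R (by lia)
  calc derivative (bernsteinTail R n (t + 1))
      = ∑ k ∈ Finset.Ico t n, derivative (bernsteinPolynomial R n (k + 1)) := by
        rw [bernsteinTail, derivative_sum, Finset.sum_Ico_add' (fun k ↦
          derivative (bernsteinPolynomial R n k)), Finset.Ico_add_one_right_eq_Icc]
    _ = -n * ∑ k ∈ Finset.Ico t n,
          (bernsteinPolynomial R (n - 1) (k + 1) - bernsteinPolynomial R (n - 1) k) := by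
        rw [Finset.mul_sum]
        refine Finset.sum_congr rfl fun k _ ↦ ?_
        rw [bernsteinPolynomial.derivative_succ]
        ring
    _ = n * bernsteinPolynomial R (n - 1) t := by
        rw [Finset.sum_Ico_sub _ (Nat.le_of_succ_le hθn), htop]
        ring

theorem eval_zero_bernsteinTail (R : Type*) [CommRing R] (n : ℕ) {θ : ℕ} (hθ : 0 < θ) :
    (bernsteinTail R n θ).eval 0 = 0 := by
  rw [bernsteinTail, eval_finsetSum]
  refine Finset.sum_eq_zero fun k hk ↦ ?_
  rw [bernsteinPolynomial.eval_at_0, if_neg (hθ.trans_le (Finset.mem_Icc.mp hk).1).ne']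

theorem eval_one_bernsteinTail (R : Type*) [CommRing R] {n θ : ℕ} (hθn : θ ≤ n) :
    (bernsteinTail R n θ).eval 1 = 1 := by
  simp [bernsteinTail, eval_finsetSum, bernsteinPolynomial.eval_at_1, hθn]

variable {R : Type*} [CommRing R] [PartialOrder R] {n θ : ℕ} {x : R}

theorem eval_bernsteinTail_lt_one [IsStrictOrderedRing R] (hθ : 0 < θ) (hx : x ∈ Ico 0 1) :
    (bernsteinTail R n θ).eval x < 1 := by
  have hzero : 0 < (bernsteinPolynomial R n 0).eval x := by
    simpa [bernsteinPolynomial] using pow_pos (sub_pos.mpr hx.2) n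
  calc (bernsteinTail R n θ).eval x
      = ∑ k ∈ Finset.Icc θ n, (bernsteinPolynomial R n k).eval x := eval_finsetSum ..
    _ < ∑ k ∈ Finset.range (n + 1), (bernsteinPolynomial R n k).eval x := by
        refine Finset.sum_lt_sum_of_subset (i := 0) (fun k hk ↦ ?_) (by simp) (by simp [hθ.ne'])
          hzero fun k _ _ ↦ eval_bernsteinPolynomial_nonneg n k (Ico_subset_Icc_self hx)
        exact Finset.mem_range_succ_iff.mpr (Finset.mem_Icc.mp hk).2
    _ = 1 := by rw [← eval_finsetSum, bernsteinPolynomial.sum, eval_one]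

theorem pow_le_eval_bernsteinTail [IsOrderedRing R] (hθn : θ ≤ n) (hx : x ∈ Icc 0 1) :
    x ^ n ≤ (bernsteinTail R n θ).eval x := by
  calc x ^ n = (bernsteinPolynomial R n n).eval x := by simp [bernsteinPolynomial]
    _ ≤ ∑ k ∈ Finset.Icc θ n, (bernsteinPolynomial R n k).eval x :=
        Finset.single_le_sum (fun k _ ↦ eval_bernsteinPolynomial_nonneg n k hx) (by simp [hθn])
    _ = (bernsteinTail R n θ).eval x := (eval_finsetSum ..).symm

end BernsteinTail

section PhiBP

variable {n θ : ℕ} {p x : ℝ}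

theorem phiBP_eq_eval_bernsteinTail (n θ : ℕ) (p x : ℝ) :
    phiBP n θ p x = p + (1 - p) * (bernsteinTail ℝ n θ).eval x := by
  simp [phiBP, bernsteinTail, bernsteinPolynomial, eval_finsetSum]

theorem continuous_phiBP (n θ : ℕ) (p : ℝ) : Continuous (phiBP n θ p) := by
  unfold phiBP
  fun_prop

theorem hasDerivAt_phiBP (hθ : 0 < θ) (hθn : θ ≤ n) (p x : ℝ) :
    HasDerivAt (phiBP n θ p)
      ((1 - p) * (n * (bernsteinPolynomial ℝ (n - 1) (θ - 1)).eval x)) x := by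
  have h := (((bernsteinTail ℝ n θ).hasDerivAt x).const_mul (1 - p)).const_add p
  rw [derivative_bernsteinTail ℝ hθ hθn, eval_mul, eval_natCast] at h
  exact h.congr_of_eventuallyEq (.of_forall (phiBP_eq_eval_bernsteinTail n θ p))

theorem phiBP_zero (n : ℕ) (hθ : 0 < θ) (p : ℝ) : phiBP n θ p 0 = p := by
  simp [phiBP_eq_eval_bernsteinTail, eval_zero_bernsteinTail ℝ n hθ]

theorem phiBP_one (hθn : θ ≤ n) (p : ℝ) : phiBP n θ p 1 = 1 := by
  simp [phiBP_eq_eval_bernsteinTail, eval_one_bernsteinTail ℝ hθn]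

theorem strictMono_phiBP (hθ : 0 < θ) (hx : x ∈ Ico 0 1) : StrictMono fun p ↦ phiBP n θ p x := by
  intro p q hpq
  simp only [phiBP_eq_eval_bernsteinTail]
  linear_combination mul_pos (sub_pos.mpr hpq)
    (sub_pos.mpr (eval_bernsteinTail_lt_one (n := n) hθ hx))

theorem lt_phiBP_of_one_sub_mul_lt_one (hθn : θ ≤ n) (hp : p ≤ 1) (hpn : (1 - p) * n < 1)
    (hx : x ∈ Ico 0 1) : x < phiBP n θ p x := by
  have hbernoulli : 1 + n * (x - 1) ≤ (bernsteinTail ℝ n θ).eval x :=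
    (one_add_mul_sub_le_pow (by linarith [hx.1]) n).trans
      (pow_le_eval_bernsteinTail hθn (Ico_subset_Icc_self hx))
  rw [phiBP_eq_eval_bernsteinTail]
  linear_combination mul_le_mul_of_nonneg_left hbernoulli (sub_nonneg.mpr hp) +
    mul_lt_mul_of_pos_right hpn (sub_pos.mpr hx.2)

end PhiBP

section FixedPoints

variable {n θ : ℕ} {p x : ℝ}

theorem encard_Icc_inter_fixedPoints_phiBP_le_three (hθ : 0 < θ) (hθn : θ < n) (p : ℝ) :
    (Icc 0 1 ∩ fixedPoints (phiBP n θ p)).encard ≤ 3 := by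
  have hderiv (x : ℝ) := (hasDerivAt_phiBP hθ hθn.le p x).sub (hasDerivAt_id x)
  have hfixed : fixedPoints (phiBP n θ p) = (phiBP n θ p - id) ⁻¹' {0} := by
    ext x
    simp [IsFixedPt, sub_eq_zero]
  rw [hfixed]
  refine (encard_inter_fiber_le_encard_deriv_zeros_add_one ordConnected_Icc
    (fun x _ ↦ (hderiv x).continuousAt.continuousWithinAt) 0).trans ?_
  rw [← two_add_one_eq_three]
  gcongr
  refine le_trans (encard_le_encard ?_) (encard_Icc_inter_bernsteinPolynomial_fiber_le_two
    (n := n - 1) (ν := θ - 1) (by lia) (by lia) ((1 - p) * n)⁻¹)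
  rintro x ⟨hx, hx0⟩
  rw [mem_preimage, (hderiv x).deriv, mem_singleton_iff, sub_eq_zero, ← mul_assoc] at hx0
  exact ⟨interior_subset hx, eq_inv_of_mul_eq_one_right hx0⟩

theorem encard_Ioo_inter_fixedPoints_phiBP_le_two (hθ : 0 < θ) (hθn : θ < n) (p : ℝ) :
    (Ioo 0 1 ∩ fixedPoints (phiBP n θ p)).encard ≤ 2 := by
  have hone : (1 : ℝ) ∉ Ioo 0 1 ∩ fixedPoints (phiBP n θ p) := by simp
  have hsub : insert 1 (Ioo 0 1 ∩ fixedPoints (phiBP n θ p)) ⊆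
      Icc 0 1 ∩ fixedPoints (phiBP n θ p) :=
    insert_subset ⟨by simp, phiBP_one hθn.le p⟩ (inter_subset_inter_left _ Ioo_subset_Icc_self)
  have hcard := (encard_le_encard hsub).trans
    (encard_Icc_inter_fixedPoints_phiBP_le_three hθ hθn p)
  rw [encard_insert_of_notMem hone, ← two_add_one_eq_three] at hcard
  exact (ENat.add_le_add_iff_right ENat.one_ne_top).mp hcard

theorem eventually_nhdsLT_one_lt_phiBP (hθ : 0 < θ) (hθn : θ < n) (p : ℝ) :
    ∀ᶠ x in 𝓝[<] 1, x < phiBP n θ p x := by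
  have hderiv : deriv (phiBP n θ p - id) 1 = -1 := by
    rw [((hasDerivAt_phiBP hθ hθn.le p 1).sub (hasDerivAt_id 1)).deriv,
      bernsteinPolynomial.eval_at_1, if_neg (by lia)]
    ring
  have hsign := eventually_nhdsWithin_sign_eq_of_deriv_neg (f := phiBP n θ p - id) (x₀ := 1)
    (by rw [hderiv]; norm_num) (by simp [phiBP_one hθn.le p])
  filter_upwards [nhdsWithin_le_nhds hsign, self_mem_nhdsWithin] with x hx hx1
  rw [sign_pos (sub_pos.mpr hx1), sign_eq_one_iff] at hx
  exact sub_pos.mp hx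

theorem exists_Ioo_inter_fixedPoints_phiBP_eq_pair (hθ : 0 < θ) (hθn : θ < n) (hp : 0 < p)
    (hx : x ∈ Ioo 0 1) (hphi : phiBP n θ p x < x) :
    ∃ x₁ x₂, x₁ ≠ x₂ ∧ Ioo 0 1 ∩ fixedPoints (phiBP n θ p) = {x₁, x₂} := by
  have hcont : Continuous fun y ↦ phiBP n θ p y - y := (continuous_phiBP n θ p).sub continuous_id
  obtain ⟨y, hyphi, hxy, hy1⟩ := ((eventually_nhdsLT_one_lt_phiBP hθ hθn p).and
    (Ioo_mem_nhdsLT hx.2)).exists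
  obtain ⟨x₁, hx₁, hfix₁⟩ := intermediate_value_Ioo' hx.1.le hcont.continuousOn
    (show (0 : ℝ) ∈ Ioo _ _ from ⟨sub_neg.mpr hphi, by simpa [phiBP_zero n hθ] using hp⟩)
  obtain ⟨x₂, hx₂, hfix₂⟩ := intermediate_value_Ioo hxy.le hcont.continuousOn
    (show (0 : ℝ) ∈ Ioo _ _ from ⟨sub_neg.mpr hphi, sub_pos.mpr hyphi⟩)
  have hne : x₁ ≠ x₂ := (hx₁.2.trans hx₂.1).ne
  have hpair : {x₁, x₂} ⊆ Ioo 0 1 ∩ fixedPoints (phiBP n θ p) :=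
    pair_subset ⟨⟨hx₁.1, hx₁.2.trans hx.2⟩, sub_eq_zero.mp hfix₁⟩
      ⟨⟨hx.1.trans hx₂.1, hx₂.2.trans hy1⟩, sub_eq_zero.mp hfix₂⟩
  refine ⟨x₁, x₂, hne, ((toFinite {x₁, x₂}).eq_of_subset_of_encard_le hpair ?_).symm⟩
  rw [encard_pair hne]
  exact encard_Ioo_inter_fixedPoints_phiBP_le_two hθ hθn p

end FixedPoints

section Supercritical

/-- The parameters `p` for which the graph of `phiBP n θ p` lies strictly above the diagonal on
`(0, 1)`; the critical probability is the infimum of this set. -/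
def supercriticalSet (n θ : ℕ) : Set ℝ :=
  {p | 0 < p ∧ p < 1 ∧ ∀ x, 0 < x → x < 1 → x < phiBP n θ p x}

variable {n θ : ℕ} {p : ℝ}

theorem supercriticalSet_nonempty (hθn : θ ≤ n) : (supercriticalSet n θ).Nonempty := by
  have hn : (0 : ℝ) < n + 2 := by positivity
  have hinv : ((n : ℝ) + 2)⁻¹ < 1 := inv_lt_one_of_one_lt₀ (by linarith)
  refine ⟨1 - ((n : ℝ) + 2)⁻¹, by linarith, by simpa using hn, fun x hx0 hx1 ↦ ?_⟩
  refine lt_phiBP_of_one_sub_mul_lt_one hθn (by simpa using hn.le) ?_ ⟨hx0.le, hx1⟩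
  rw [sub_sub_cancel, inv_mul_lt_iff₀ hn]
  linarith

theorem bddBelow_supercriticalSet (n θ : ℕ) : BddBelow (supercriticalSet n θ) :=
  ⟨0, fun _ hp ↦ hp.1.le⟩

theorem exists_phiBP_lt_of_lt_sInf_supercriticalSet (hθ : 0 < θ) (hθn : θ ≤ n) (hp0 : 0 < p)
    (hp : p < sInf (supercriticalSet n θ)) : ∃ x ∈ Ioo 0 1, phiBP n θ p x < x := by
  obtain ⟨q, hpq, hq⟩ := exists_between hp
  obtain ⟨r, hr⟩ := supercriticalSet_nonempty hθn
  have hq1 : q < 1 := (hq.trans_le (csInf_le (bddBelow_supercriticalSet n θ) hr)).trans hr.2.1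
  have hnot : ¬∀ x, 0 < x → x < 1 → x < phiBP n θ q x := fun h ↦
    notMem_of_lt_csInf hq (bddBelow_supercriticalSet n θ) ⟨hp0.trans hpq, hq1, h⟩
  push Not at hnot
  obtain ⟨x, hx0, hx1, hx⟩ := hnot
  exact ⟨x, ⟨hx0, hx1⟩, (strictMono_phiBP hθ ⟨hx0.le, hx1⟩ hpq).trans_le hx⟩

theorem lt_phiBP_of_sInf_supercriticalSet_lt (hθ : 0 < θ) (hθn : θ ≤ n)
    (hp : sInf (supercriticalSet n θ) < p) {x : ℝ} (hx : x ∈ Ioo 0 1) : x < phiBP n θ p x := by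
  obtain ⟨q, hq, hqp⟩ := exists_lt_of_csInf_lt (supercriticalSet_nonempty hθn) hp
  exact (hq.2.2 x hx.1 hx.2).trans (strictMono_phiBP hθ (Ioo_subset_Ico_self hx) hqp)

end Supercritical

theorem stmt_10 (n θ : ℕ) (hθ : 2 ≤ θ) (hθn : θ < n)
    (pc : ℝ)
    (hpc : pc = sInf {p : ℝ | 0 < p ∧ p < 1 ∧ ∀ x : ℝ, 0 < x → x < 1 → phiBP n θ p x > x}) :
    (∀ p : ℝ, 0 < p → p < pc →
      ∃ x₁ x₂ : ℝ, x₁ ≠ x₂ ∧ 0 < x₁ ∧ x₁ < 1 ∧ 0 < x₂ ∧ x₂ < 1 ∧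
        phiBP n θ p x₁ = x₁ ∧ phiBP n θ p x₂ = x₂ ∧
        ∀ x : ℝ, 0 < x → x < 1 → phiBP n θ p x = x → x = x₁ ∨ x = x₂) ∧
    (∀ p : ℝ, pc < p → p < 1 → ∀ x : ℝ, 0 < x → x < 1 → phiBP n θ p x ≠ x) := by
  subst hpc
  have hθ0 : 0 < θ := by lia
  refine ⟨fun p hp0 hp ↦ ?_, fun p hp _ x hx0 hx1 ↦ ?_⟩
  · obtain ⟨x, hx, hphi⟩ := exists_phiBP_lt_of_lt_sInf_supercriticalSet hθ0 hθn.le hp0 hp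
    obtain ⟨x₁, x₂, hne, hpair⟩ := exists_Ioo_inter_fixedPoints_phiBP_eq_pair hθ0 hθn hp0 hx hphi
    obtain ⟨⟨h₁0, h₁1⟩, hfix₁⟩ := hpair.ge (mem_insert x₁ {x₂})
    obtain ⟨⟨h₂0, h₂1⟩, hfix₂⟩ := hpair.ge (mem_insert_of_mem x₁ rfl)
    exact ⟨x₁, x₂, hne, h₁0, h₁1, h₂0, h₂1, hfix₁, hfix₂,
      fun y hy0 hy1 hy ↦ hpair.le ⟨⟨hy0, hy1⟩, hy⟩⟩
  · exact (lt_phiBP_of_sInf_supercriticalSet_lt hθ0 hθn.le hp ⟨hx0, hx1⟩).ne'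
end
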